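/- arXiv:2602.06481 — 4 statements merged into one kernel-verified Lean document; each statement's English description precedes it below -/
import Mathlib

section
/- There exists a universal constant C > 0 (independent of ℓ₁ and ℓ₂) with the following property. For all ℓ₁ ≥ ℓ₂ > 0, every integer M ≥ 1, and every configuration (x₁, …, x_M) ∈ (ℝ³)^M, one has ∑ 1(|x_i − x_j| ≤ ℓ₁) 1(|x_i − x_k| ≤ ℓ₁) 1(|x_i − x_l| ≤ ℓ₁) 1(|x_i − x_m| ≤ ℓ₁) ≤ C (ℓ₁/ℓ₂)^{12} M + C M (ℓ₁/ℓ₂)³ ∑ 1(|x_i − x_j| ≤ ℓ₂) 1(|x_i − x_k| ≤ ℓ₁) 1(|x_i − x_l| ≤ ℓ₁), where the first sum runs over quintuples (i,j,k,l,m) of pairwise distinct indices in {1,…,M} and the second over quadruples (i,j,k,l) of pairwise distinct indices in {1,…,M}. -/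
noncomputable section

local notation "E3" => EuclideanSpace ℝ (Fin 3)

/-!
Let `n` particles in dimension `d` lie in a ball of radius `ℓ₁ / 2`, and cover it by
`K ≲ (ℓ₁ / ℓ₂) ^ d` balls of radius `ℓ₂ / 2`. By Cauchy-Schwarz, unless `n ≲ K`, at least of the
order of `n ^ 2 / K` ordered pairs share a small ball. Completing such a pair by any two other
particles of the cluster gives a term of the four-body interaction, so
`n ^ 4 ≲ K ^ 4 + K * (four-body interaction)`. The ball of radius `ℓ₁` around a particle is covered
by boundedly many balls of radius `ℓ₁ / 2`, so the fourth power of the number of its neighbours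
obeys the same bound. Only the summation over the particles costs the factor `M`.
-/

open Finset Metric Module MeasureTheory

section Covering

variable {E : Type*} [NormedAddCommGroup E] [NormedSpace ℝ E] [FiniteDimensional ℝ E]

lemma card_le_of_pairwise_le_dist_of_subset_closedBall {x : E} {R ε : ℝ} (hR : 0 ≤ R)
    (hε : 0 < ε) {t : Finset E} (ht : (t : Set E).Pairwise fun c d => ε ≤ dist c d)
    (htR : (t : Set E) ⊆ closedBall x R) : (#t : ℝ) ≤ (1 + 2 * R / ε) ^ finrank ℝ E := by
  borelize E
  let μ : Measure E := Measure.addHaar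
  have hdisj : (t : Set E).PairwiseDisjoint fun c => ball c (ε / 2) := fun c hc d hd hcd =>
    ball_disjoint_ball ((add_halves ε).trans_le (ht hc hd hcd))
  have hsub : ⋃ c ∈ t, ball c (ε / 2) ⊆ ball x (R + ε / 2) :=
    Set.iUnion₂_subset fun c hc => ball_subset_ball' (by linarith [mem_closedBall.1 (htR hc)])
  have hball (c : E) {r : ℝ} (hr : 0 < r) :
      μ.real (ball c r) = r ^ finrank ℝ E * μ.real (ball 0 1) := by
    rw [measureReal_def, μ.addHaar_ball_of_pos c hr, ENNReal.toReal_mul,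
      ENNReal.toReal_ofReal (by positivity), measureReal_def]
  have hunit : 0 < μ.real (ball 0 1) :=
    ENNReal.toReal_pos (measure_ball_pos μ _ one_pos).ne' measure_ball_lt_top.ne
  have hvol : #t * (ε / 2) ^ finrank ℝ E ≤ (R + ε / 2) ^ finrank ℝ E := by
    refine le_of_mul_le_mul_right ?_ hunit
    calc #t * (ε / 2) ^ finrank ℝ E * μ.real (ball 0 1)
        = μ.real (⋃ c ∈ t, ball c (ε / 2)) := by
          rw [measureReal_biUnion_finset hdisj fun _ _ => measurableSet_ball,
            sum_congr rfl fun c _ => hball c (half_pos hε), sum_const, nsmul_eq_mul, mul_assoc]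
      _ ≤ μ.real (ball x (R + ε / 2)) := measureReal_mono hsub measure_ball_lt_top.ne
      _ = (R + ε / 2) ^ finrank ℝ E * μ.real (ball 0 1) := hball x (by positivity)
  calc (#t : ℝ) ≤ ((R + ε / 2) / (ε / 2)) ^ finrank ℝ E := by
        rwa [div_pow, le_div_iff₀ (by positivity)]
    _ = (1 + 2 * R / ε) ^ finrank ℝ E := by
        congr 1
        field_simp
        ring

lemma exists_finset_card_le_forall_mem_closedBall_dist_le (x : E) {R ε : ℝ} (hR : 0 ≤ R)
    (hε : 0 < ε) : ∃ t : Finset E, (#t : ℝ) ≤ (1 + 2 * R / ε) ^ finrank ℝ E ∧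
      ∀ y ∈ closedBall x R, ∃ c ∈ t, dist y c ≤ ε := by
  lift ε to NNReal using hε.le
  have hfin : packingNumber ε (closedBall x R) ≠ ⊤ := by
    have : ProperSpace E := FiniteDimensional.proper_real E
    obtain ⟨N, -, hN, hcover⟩ := exists_finite_isCover_of_isCompact
      (ε := ε / 2) (by simpa using hε.ne') (isCompact_closedBall x R)
    have hle := packingNumber_two_mul_le_externalCoveringNumber (ε / 2) (closedBall x R)
    rw [mul_div_cancel₀ _ two_ne_zero] at hle
    exact ne_top_of_le_ne_top hN.encard_lt_top.ne
      (hle.trans hcover.externalCoveringNumber_le_encard)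
  set S := maximalSeparatedSet ε (closedBall x R)
  have hS : S.Finite := by
    rw [← Set.encard_ne_top_iff, encard_maximalSeparatedSet hfin]
    exact hfin
  refine ⟨hS.toFinset, card_le_of_pairwise_le_dist_of_subset_closedBall (x := x) hR hε ?_ ?_,
    fun y hy => ?_⟩
  · intro c hc d hd hcd
    have hsep : ε < edist c d :=
      isSeparated_maximalSeparatedSet (hS.mem_toFinset.1 hc) (hS.mem_toFinset.1 hd) hcd
    rw [edist_nndist, ENNReal.coe_lt_coe] at hsep
    exact hsep.le
  · rw [hS.coe_toFinset]
    exact maximalSeparatedSet_subset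
  · simpa using isCover_iff_subset_iUnion_closedBall.1 (isCover_maximalSeparatedSet hfin) hy

end Covering

section Counting

variable {ι : Type*}

lemma sq_card_le_card_mul_card_add_card_filter_offDiag {κ : Type*} [DecidableEq κ] {s : Finset ι}
    {q : ι → κ} {t : Finset κ} (hq : ∀ i ∈ s, q i ∈ t) :
    #s ^ 2 ≤ #t * (#s + #{p ∈ s.offDiag | q p.1 = q p.2}) := by
  classical
  have hpairs : ∑ c ∈ t, #{i ∈ s | q i = c} ^ 2 = #s + #{p ∈ s.offDiag | q p.1 = q p.2} := by
    have hfilter : #{p ∈ s ×ˢ s | q p.1 = q p.2} = ∑ c ∈ t, #{i ∈ s | q i = c} ^ 2 := by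
      rw [card_eq_sum_card_fiberwise (f := fun p => q p.1) (t := t)
        fun p hp => hq _ (mem_product.1 (mem_filter.1 hp).1).1]
      refine sum_congr rfl fun c _ => ?_
      rw [sq, ← card_product]
      congr 1
      grind
    rw [← hfilter, ← diag_union_offDiag, filter_union, card_union_of_disjoint
      (disjoint_filter_filter (disjoint_diag_offDiag s)), ← diag_card s]
    congr 2
    grind
  rw [← hpairs, card_eq_sum_card_fiberwise hq]
  exact sq_sum_le_card_mul_sum_sq

lemma card_offDiag_erase_erase [DecidableEq ι] {s : Finset ι} {i j : ι} (hi : i ∈ s) (hj : j ∈ s)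
    (hij : i ≠ j) :
    (#((s.erase i).erase j).offDiag : ℝ) = ((#s : ℝ) - 2) * ((#s : ℝ) - 3) := by
  have hcard : (#((s.erase i).erase j) : ℝ) = #s - 2 := by
    rw [cast_card_erase_of_mem (mem_erase.2 ⟨hij.symm, hj⟩), cast_card_erase_of_mem hi]
    ring
  rw [offDiag_card, Nat.cast_sub (Nat.le_mul_self _), Nat.cast_mul, hcard]
  ring

end Counting

-- `n` counts the particles of a cluster, `K` the small cells covering it, `P` its close ordered
-- pairs, and `F` is the four-body interaction.
lemma pow_four_le_of_sq_le_mul_add {n K P F : ℝ} (hn : 0 ≤ n) (hK : 1 ≤ K) (hP : 0 ≤ P)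
    (hF : 0 ≤ F) (hpairs : n ^ 2 ≤ K * (n + P)) (hcomplete : P * ((n - 2) * (n - 3)) ≤ F) :
    n ^ 4 ≤ 1296 * K ^ 4 + 8 * K * F := by
  rcases le_total n (6 * K) with hsmall | hlarge
  · calc n ^ 4 ≤ (6 * K) ^ 4 := by gcongr
      _ = 1296 * K ^ 4 := by ring
      _ ≤ 1296 * K ^ 4 + 8 * K * F := le_add_of_nonneg_right (by positivity)
  · have hP' : n ^ 2 ≤ 2 * K * P := by nlinarith
    have hn' : n ^ 2 ≤ 4 * ((n - 2) * (n - 3)) := by nlinarith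
    calc n ^ 4 = n ^ 2 * n ^ 2 := by ring
      _ ≤ 2 * K * P * (4 * ((n - 2) * (n - 3))) := by gcongr
      _ = 8 * K * (P * ((n - 2) * (n - 3))) := by ring
      _ ≤ 8 * K * F := by gcongr
      _ ≤ 1296 * K ^ 4 + 8 * K * F := le_add_of_nonneg_left (by positivity)

section Interaction

variable {ι X : Type*} [Fintype ι] [DecidableEq ι] [PseudoMetricSpace X] {x : ι → X} {ℓ₁ ℓ₂ : ℝ}

/-- The five-body interaction of range `ℓ` of the configuration `x`: the number of quintuples of
distinct particles whose last four members are within distance `ℓ` of the first. -/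
def fiveBodyInteraction (x : ι → X) (ℓ : ℝ) : ℝ :=
  ∑ i, ∑ j, ∑ k, ∑ l, ∑ m,
    if [i, j, k, l, m].Nodup ∧ dist (x i) (x j) ≤ ℓ ∧ dist (x i) (x k) ≤ ℓ ∧
        dist (x i) (x l) ≤ ℓ ∧ dist (x i) (x m) ≤ ℓ
      then 1 else 0

/-- The four-body interaction of the configuration `x`: the number of quadruples of distinct
particles whose second member is within the short range `ℓ₂` of the first, and whose last two are
within the range `ℓ₁` of the first. -/
def fourBodyInteraction (x : ι → X) (ℓ₁ ℓ₂ : ℝ) : ℝ :=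
  ∑ i, ∑ j, ∑ k, ∑ l,
    if [i, j, k, l].Nodup ∧ dist (x i) (x j) ≤ ℓ₂ ∧ dist (x i) (x k) ≤ ℓ₁ ∧
        dist (x i) (x l) ≤ ℓ₁
      then 1 else 0

lemma fourBodyInteraction_nonneg : 0 ≤ fourBodyInteraction x ℓ₁ ℓ₂ := by
  unfold fourBodyInteraction
  positivity

lemma fiveBodyInteraction_le_sum_card_pow_four (x : ι → X) (ℓ : ℝ) :
    fiveBodyInteraction x ℓ ≤ ∑ i, (#{j | dist (x i) (x j) ≤ ℓ} : ℝ) ^ 4 := by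
  refine sum_le_sum fun i _ => ?_
  set near : ι → ℝ := fun j => if dist (x i) (x j) ≤ ℓ then 1 else 0 with hnear
  calc _ ≤ ∑ j, ∑ k, ∑ l, ∑ m, near j * (near k * (near l * near m)) := by
        gcongr with j _ k _ l _ m _
        simp only [hnear]
        split_ifs <;> simp_all
    _ = (∑ j, near j) ^ 4 := by
        simp only [← mul_sum, ← sum_mul]
        ring
    _ = (#{j | dist (x i) (x j) ≤ ℓ} : ℝ) ^ 4 := by rw [sum_boole]

lemma card_filter_offDiag_mul_le_fourBodyInteraction {s : Finset ι}
    (hs : ∀ i ∈ s, ∀ j ∈ s, dist (x i) (x j) ≤ ℓ₁) :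
    (#{p ∈ s.offDiag | dist (x p.1) (x p.2) ≤ ℓ₂} : ℝ) * (((#s : ℝ) - 2) * ((#s : ℝ) - 3))
      ≤ fourBodyInteraction x ℓ₁ ℓ₂ := by
  set P := {p ∈ s.offDiag | dist (x p.1) (x p.2) ≤ ℓ₂}
  calc (#P : ℝ) * (((#s : ℝ) - 2) * ((#s : ℝ) - 3))
      = ∑ p ∈ P, ∑ _q ∈ ((s.erase p.1).erase p.2).offDiag, 1 := by
        rw [← nsmul_eq_mul, ← sum_const]
        refine sum_congr rfl fun p hp => ?_
        obtain ⟨hi, hj, hij⟩ := mem_offDiag.1 (mem_filter.1 hp).1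
        rw [← card_offDiag_erase_erase hi hj hij, cast_card]
    _ ≤ ∑ p ∈ P, ∑ q ∈ ((s.erase p.1).erase p.2).offDiag,
          if [p.1, p.2, q.1, q.2].Nodup ∧ dist (x p.1) (x p.2) ≤ ℓ₂ ∧
            dist (x p.1) (x q.1) ≤ ℓ₁ ∧ dist (x p.1) (x q.2) ≤ ℓ₁ then 1 else 0 := by
        refine sum_le_sum fun p hp => sum_le_sum fun q hq => (if_pos ?_).ge
        simp only [P, mem_filter, mem_offDiag, mem_erase] at hp hq
        refine ⟨?_, hp.2, hs _ hp.1.1 _ hq.1.2.2, hs _ hp.1.1 _ hq.2.1.2.2⟩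
        grind
    _ ≤ ∑ p : ι × ι, ∑ q : ι × ι,
          if [p.1, p.2, q.1, q.2].Nodup ∧ dist (x p.1) (x p.2) ≤ ℓ₂ ∧
            dist (x p.1) (x q.1) ≤ ℓ₁ ∧ dist (x p.1) (x q.2) ≤ ℓ₁ then 1 else 0 := by
        refine (sum_le_univ_sum_of_nonneg fun p => by positivity).trans' (sum_le_sum fun p _ => ?_)
        exact sum_le_univ_sum_of_nonneg fun q => by positivity
    _ = fourBodyInteraction x ℓ₁ ℓ₂ := by
        simp only [fourBodyInteraction, Fintype.sum_prod_type]

lemma card_pow_four_le_of_maps_to {κ : Type*} {s : Finset ι} {q : ι → κ} {t : Finset κ}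
    {K : ℝ} (hs : ∀ i ∈ s, ∀ j ∈ s, dist (x i) (x j) ≤ ℓ₁) (hqt : ∀ i ∈ s, q i ∈ t)
    (hq : ∀ i ∈ s, ∀ j ∈ s, q i = q j → dist (x i) (x j) ≤ ℓ₂) (htK : (#t : ℝ) ≤ K) (hK : 1 ≤ K) :
    (#s : ℝ) ^ 4 ≤ 1296 * K ^ 4 + 8 * K * fourBodyInteraction x ℓ₁ ℓ₂ := by
  classical
  refine pow_four_le_of_sq_le_mul_add (Nat.cast_nonneg _) hK (Nat.cast_nonneg _)
    fourBodyInteraction_nonneg ?_ (card_filter_offDiag_mul_le_fourBodyInteraction hs)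
  have hsame : #{p ∈ s.offDiag | q p.1 = q p.2}
      ≤ #{p ∈ s.offDiag | dist (x p.1) (x p.2) ≤ ℓ₂} :=
    card_le_card fun p hp => by
      simp only [mem_filter, mem_offDiag] at hp ⊢
      exact ⟨hp.1, hq _ hp.1.1 _ hp.1.2.1 hp.2⟩
  calc (#s : ℝ) ^ 2 ≤ #t * (#s + #{p ∈ s.offDiag | q p.1 = q p.2}) := by
        exact_mod_cast sq_card_le_card_mul_card_add_card_filter_offDiag hqt
    _ ≤ K * (#s + #{p ∈ s.offDiag | dist (x p.1) (x p.2) ≤ ℓ₂}) := by gcongr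

end Interaction

section FiniteDimensional

variable {ι E : Type*} [Fintype ι] [NormedAddCommGroup E] [NormedSpace ℝ E]
  [FiniteDimensional ℝ E] {ℓ₁ ℓ₂ : ℝ}

lemma exists_card_dist_le_le_mul_card_dist_le_half (x : ι → E) (c : E) {ℓ : ℝ} (hℓ : 0 < ℓ) :
    ∃ b, (#{j | dist (x j) c ≤ ℓ} : ℝ) ≤ 5 ^ finrank ℝ E * #{j | dist (x j) b ≤ ℓ / 2} := by
  classical
  obtain ⟨t, ht, hcover⟩ := exists_finset_card_le_forall_mem_closedBall_dist_le c hℓ.le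
    (half_pos hℓ)
  have hratio : 1 + 2 * ℓ / (ℓ / 2) = 5 := by
    field_simp
    norm_num
  rw [hratio] at ht
  choose! q hqt hq using hcover
  have htpos : (0 : ℝ) < #t :=
    Nat.cast_pos.2 (card_pos.2 ⟨q c, hqt c (mem_closedBall_self hℓ.le)⟩)
  set s : Finset ι := {j | dist (x j) c ≤ ℓ}
  obtain ⟨b, -, hb⟩ : ∃ b ∈ t, (#s / #t : ℝ) ≤ #{j ∈ s | q (x j) = b} :=
    exists_le_card_fiber_of_nsmul_le_card_of_maps_to (fun j hj => hqt _ (mem_filter.1 hj).2)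
      (card_pos.1 (Nat.cast_pos.1 htpos)) (by rw [nsmul_eq_mul, mul_div_cancel₀ _ htpos.ne'])
  have hfiber : {j ∈ s | q (x j) = b} ⊆ ({j | dist (x j) b ≤ ℓ / 2} : Finset ι) := fun j hj => by
    obtain ⟨hjs, rfl⟩ := mem_filter.1 hj
    exact mem_filter.2 ⟨mem_univ j, hq _ (mem_filter.1 hjs).2⟩
  refine ⟨b, ?_⟩
  calc (#s : ℝ) ≤ #t * #{j ∈ s | q (x j) = b} := (div_le_iff₀' htpos).1 hb
    _ ≤ 5 ^ finrank ℝ E * #{j | dist (x j) b ≤ ℓ / 2} := by gcongr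

variable [DecidableEq ι]

lemma card_dist_le_half_pow_four_le (x : ι → E) (c : E) (h₂ : 0 < ℓ₂) (h : ℓ₂ ≤ ℓ₁) :
    (#{j | dist (x j) c ≤ ℓ₁ / 2} : ℝ) ^ 4
      ≤ 1296 * ((3 * (ℓ₁ / ℓ₂)) ^ finrank ℝ E) ^ 4
        + 8 * (3 * (ℓ₁ / ℓ₂)) ^ finrank ℝ E * fourBodyInteraction x ℓ₁ ℓ₂ := by
  have hr : 1 ≤ ℓ₁ / ℓ₂ := (one_le_div h₂).2 h
  obtain ⟨t, ht, hcover⟩ := exists_finset_card_le_forall_mem_closedBall_dist_le c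
    (by linarith : 0 ≤ ℓ₁ / 2) (half_pos h₂)
  choose! q hqt hq using hcover
  have hs {j : ι} (hj : j ∈ ({j | dist (x j) c ≤ ℓ₁ / 2} : Finset ι)) :
      dist (x j) c ≤ ℓ₁ / 2 := (mem_filter.1 hj).2
  refine card_pow_four_le_of_maps_to (q := q ∘ x) (fun i hi j hj => ?_)
    (fun i hi => hqt _ (hs hi)) (fun i hi j hj hij => ?_) (ht.trans ?_) (one_le_pow₀ (by linarith))
  · linarith [dist_triangle_right (x i) (x j) c, hs hi, hs hj]
  · have hi' := hq _ (hs hi)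
    rw [show q (x i) = q (x j) from hij] at hi'
    linarith [dist_triangle_right (x i) (x j) (q (x j)), hq _ (hs hj)]
  · have hratio : 2 * (ℓ₁ / 2) / (ℓ₂ / 2) = 2 * (ℓ₁ / ℓ₂) := by field_simp
    rw [hratio]
    gcongr
    linarith

lemma card_dist_le_pow_four_le (x : ι → E) (c : E) (h₂ : 0 < ℓ₂) (h : ℓ₂ ≤ ℓ₁) :
    (#{j | dist (x j) c ≤ ℓ₁} : ℝ) ^ 4
      ≤ 1296 * 15 ^ (4 * finrank ℝ E) * ((ℓ₁ / ℓ₂) ^ (4 * finrank ℝ E)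
        + (ℓ₁ / ℓ₂) ^ finrank ℝ E * fourBodyInteraction x ℓ₁ ℓ₂) := by
  obtain ⟨b, hb⟩ := exists_card_dist_le_le_mul_card_dist_le_half x c (h₂.trans_le h)
  have hcluster := card_dist_le_half_pow_four_le x b h₂ h
  set d := finrank ℝ E
  set r := ℓ₁ / ℓ₂
  set F := fourBodyInteraction x ℓ₁ ℓ₂
  have hF : 0 ≤ F := fourBodyInteraction_nonneg
  have hr : 0 ≤ r := div_nonneg (h₂.le.trans h) h₂.le
  have hconst : (15 : ℝ) ^ (4 * d) = (5 ^ d) ^ 4 * (3 ^ d) ^ 4 := by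
    rw [← mul_pow, ← mul_pow, ← pow_mul, mul_comm d]
    norm_num
  calc (#{j | dist (x j) c ≤ ℓ₁} : ℝ) ^ 4
      ≤ (5 ^ d * #{j | dist (x j) b ≤ ℓ₁ / 2}) ^ 4 := by gcongr
    _ ≤ (5 ^ d) ^ 4 * (1296 * ((3 * r) ^ d) ^ 4 + 8 * (3 * r) ^ d * F) := by
        rw [mul_pow]
        gcongr
    _ ≤ (5 ^ d) ^ 4 * (1296 * (3 ^ d * r ^ d) ^ 4 + 1296 * (3 ^ d) ^ 4 * r ^ d * F) := by
        rw [mul_pow 3 r d, ← mul_assoc 8]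
        gcongr
        · norm_num
        · exact le_self_pow₀ (one_le_pow₀ (by norm_num)) (by norm_num)
    _ = 1296 * 15 ^ (4 * d) * (r ^ (4 * d) + r ^ d * F) := by
        rw [hconst]
        ring

theorem five_body_estimate_general (x : ι → E) (h₂ : 0 < ℓ₂) (h : ℓ₂ ≤ ℓ₁) :
    fiveBodyInteraction x ℓ₁
      ≤ 1296 * 15 ^ (4 * finrank ℝ E) * (ℓ₁ / ℓ₂) ^ (4 * finrank ℝ E) * Fintype.card ι
        + 1296 * 15 ^ (4 * finrank ℝ E) * Fintype.card ι * (ℓ₁ / ℓ₂) ^ finrank ℝ E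
          * fourBodyInteraction x ℓ₁ ℓ₂ := by
  calc fiveBodyInteraction x ℓ₁
      ≤ ∑ i, (#{j | dist (x j) (x i) ≤ ℓ₁} : ℝ) ^ 4 := by
        simpa only [dist_comm] using fiveBodyInteraction_le_sum_card_pow_four x ℓ₁
    _ ≤ ∑ _i : ι, 1296 * 15 ^ (4 * finrank ℝ E) * ((ℓ₁ / ℓ₂) ^ (4 * finrank ℝ E)
          + (ℓ₁ / ℓ₂) ^ finrank ℝ E * fourBodyInteraction x ℓ₁ ℓ₂) :=
        sum_le_sum fun i _ => card_dist_le_pow_four_le x (x i) h₂ h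
    _ = _ := by
        rw [sum_const, card_univ, nsmul_eq_mul]
        ring

end FiniteDimensional

/-- Five-body estimate: a five-body interaction of range `ℓ₁` is controlled,
configuration by configuration, by the number of particles and a four-body
interaction with one pair at the shorter range `ℓ₂`. -/
theorem five_body_estimate :
    ∃ C > 0, ∀ ℓ₁ ℓ₂ : ℝ, 0 < ℓ₂ → ℓ₂ ≤ ℓ₁ → ∀ M : ℕ, 1 ≤ M →
      ∀ x : Fin M → E3,
      (∑ i : Fin M, ∑ j : Fin M, ∑ k : Fin M, ∑ l : Fin M, ∑ m : Fin M,
          if ([i, j, k, l, m] : List (Fin M)).Nodup ∧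
              dist (x i) (x j) ≤ ℓ₁ ∧ dist (x i) (x k) ≤ ℓ₁ ∧
              dist (x i) (x l) ≤ ℓ₁ ∧ dist (x i) (x m) ≤ ℓ₁
            then (1 : ℝ) else 0)
      ≤ C * (ℓ₁ / ℓ₂) ^ 12 * M
        + C * M * (ℓ₁ / ℓ₂) ^ 3 *
            (∑ i : Fin M, ∑ j : Fin M, ∑ k : Fin M, ∑ l : Fin M,
              if ([i, j, k, l] : List (Fin M)).Nodup ∧
                  dist (x i) (x j) ≤ ℓ₂ ∧ dist (x i) (x k) ≤ ℓ₁ ∧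
                  dist (x i) (x l) ≤ ℓ₁
                then (1 : ℝ) else 0) := by
  refine ⟨1296 * 15 ^ 12, by norm_num, fun ℓ₁ ℓ₂ h₂ h M _ x => ?_⟩
  simpa only [fiveBodyInteraction, fourBodyInteraction, finrank_euclideanSpace_fin,
    Fintype.card_fin, Nat.reduceMul] using five_body_estimate_general x h₂ h
end
end

section
/- Let α, β ≥ 1 be real numbers. There exist constants C_β > 0 (depending only on β) and C_{α,β} > 0 (depending only on α and β) with the following property. For all ℓ₁ ≥ ℓ₂ ≥ ℓ₃ > 0, every integer M ≥ 0, and every configuration (x₁, …, x_M) ∈ (ℝ³)^M, one has ∑_{r ∈ ℓ₂ℤ³} (M_r^{(ℓ₁)})^α · 1(M_r^{(ℓ₁)} ≥ C_β (ℓ₁/ℓ₃)³) ≤ C_{α,β} (ℓ₁/ℓ₂)³ (ℓ₁/ℓ₃)^{3(α−1)} ∑_{s ∈ ℓ₃ℤ³} (M_s^{(ℓ₃)})^α · 1(M_s^{(ℓ₃)} ≥ β). (All but finitely many terms of each sum vanish.) -/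
noncomputable section

local notation "E3" => EuclideanSpace ℝ (Fin 3)

/-- The number of points of the configuration `x` lying in the half-open cube of side
length `ℓ` centred at the point with coordinates `c`. -/
def boxCount {M : ℕ} (x : Fin M → E3) (c : Fin 3 → ℝ) (ℓ : ℝ) : ℕ :=
  Set.ncard {i : Fin M | ∀ d : Fin 3, -(ℓ / 2) ≤ x i d - c d ∧ x i d - c d < ℓ / 2}

/-! A cube of side `ℓ₁` meets at most `(3ℓ₁/ℓ₃)^d` cells of the tiling by cubes of side `ℓ₃`. If it
contains at least `2β` times that many points, then the cells with fewer than `β` points hold at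
most half of them, so the power mean inequality over the remaining cells bounds the `α`-th power
of the count. Summing over the cubes centred on `ℓ₂ℤ^d` counts each cell at most `(3ℓ₁/ℓ₂)^d`
times. -/

open Finset

section TruncatedPower

/-- The power `y ^ α`, truncated to zero below the threshold `t`. It abbreviates the summands
`M ^ α · 1(M ≥ t)` of the two moment sums. -/
def truncatedRpow (α t y : ℝ) : ℝ :=
  y ^ α * if t ≤ y then 1 else 0

lemma truncatedRpow_zero_right {α : ℝ} (hα : α ≠ 0) (t : ℝ) : truncatedRpow α t 0 = 0 := by
  rw [truncatedRpow, Real.zero_rpow hα, zero_mul]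

lemma truncatedRpow_nonneg {y : ℝ} (hy : 0 ≤ y) (α t : ℝ) : 0 ≤ truncatedRpow α t y :=
  mul_nonneg (Real.rpow_nonneg hy α) (by split_ifs <;> norm_num)

lemma truncatedRpow_le_truncatedRpow {α y z : ℝ} (hα : 0 ≤ α) (hy : 0 ≤ y) (hyz : y ≤ z) (t : ℝ) :
    truncatedRpow α t y ≤ truncatedRpow α t z := by
  by_cases ht : t ≤ y
  · simpa only [truncatedRpow, if_pos ht, if_pos (ht.trans hyz), mul_one]
      using Real.rpow_le_rpow hy hyz hα
  · simpa only [truncatedRpow, if_neg ht, mul_zero]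
      using truncatedRpow_nonneg (hy.trans hyz) α t

variable {σ : Type*} {S : Finset σ} {N : σ → ℝ} {α β K : ℝ}

lemma sum_truncatedRpow (S : Finset σ) (N : σ → ℝ) (α t : ℝ) :
    ∑ s ∈ S, truncatedRpow α t (N s) = ∑ s ∈ S with t ≤ N s, N s ^ α := by
  simp only [truncatedRpow, mul_ite, mul_one, mul_zero, sum_filter]

lemma sum_le_card_mul_add_sum_filter_le (hβ : 0 ≤ β) (S : Finset σ) (N : σ → ℝ) :
    ∑ s ∈ S, N s ≤ #S * β + ∑ s ∈ S with β ≤ N s, N s := by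
  rw [sum_filter, ← nsmul_eq_mul, ← sum_const, ← sum_add_distrib]
  refine sum_le_sum fun s _ => ?_
  split_ifs <;> linarith

lemma truncatedRpow_sum_le (hα : 1 ≤ α) (hβ : 0 ≤ β) (hN : ∀ s ∈ S, 0 ≤ N s) (hK : #S ≤ K) :
    truncatedRpow α (2 * β * K) (∑ s ∈ S, N s) ≤
      2 ^ α * K ^ (α - 1) * ∑ s ∈ S, truncatedRpow α β (N s) := by
  have hK₀ : 0 ≤ K := (Nat.cast_nonneg _).trans hK
  have hrhs : 0 ≤ ∑ s ∈ S, truncatedRpow α β (N s) :=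
    sum_nonneg fun s hs => truncatedRpow_nonneg (hN s hs) α β
  by_cases hlarge : 2 * β * K ≤ ∑ s ∈ S, N s
  swap
  · rw [truncatedRpow, if_neg hlarge, mul_zero]
    positivity
  rw [truncatedRpow, if_pos hlarge, mul_one]
  rw [sum_truncatedRpow] at hrhs ⊢
  set S' := {s ∈ S | β ≤ N s}
  have hN' : ∀ s ∈ S', 0 ≤ N s := fun s hs => hN s (mem_of_mem_filter s hs)
  have hcard : (#S' : ℝ) ≤ K := (Nat.cast_le.2 (card_filter_le _ _)).trans hK
  have hhalf : ∑ s ∈ S, N s ≤ 2 * ∑ s ∈ S', N s := by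
    linarith [sum_le_card_mul_add_sum_filter_le hβ S N, mul_le_mul_of_nonneg_right hK hβ]
  calc (∑ s ∈ S, N s) ^ α
      ≤ (2 * ∑ s ∈ S', N s) ^ α := Real.rpow_le_rpow (sum_nonneg hN) hhalf (by linarith)
    _ = 2 ^ α * (∑ s ∈ S', N s) ^ α := Real.mul_rpow zero_le_two (sum_nonneg hN')
    _ ≤ 2 ^ α * (#S' ^ (α - 1) * ∑ s ∈ S', N s ^ α) := by
        gcongr
        exact Real.rpow_sum_le_const_mul_sum_rpow_of_nonneg S' hα hN'
    _ ≤ 2 ^ α * K ^ (α - 1) * ∑ s ∈ S', N s ^ α := by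
        rw [mul_assoc]
        gcongr

end TruncatedPower

lemma sum_sum_le_mul_tsum {τ σ : Type*} [DecidableEq σ] {f : σ → ℝ} {C : ℝ} (hf₀ : ∀ s, 0 ≤ f s)
    (hf : Summable f) (u : Finset τ) (near : τ → Finset σ)
    (hC : ∀ s, #{v ∈ u | s ∈ near v} ≤ C) :
    ∑ v ∈ u, ∑ s ∈ near v, f s ≤ C * ∑' s, f s := by
  have hC₀ : ∀ s, 0 ≤ C * f s := fun s =>
    mul_nonneg ((Nat.cast_nonneg _).trans (hC s)) (hf₀ s)
  calc ∑ v ∈ u, ∑ s ∈ near v, f s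
      = ∑ s ∈ u.biUnion near, ∑ v ∈ u with s ∈ near v, f s :=
        sum_comm' fun v s => by simp only [mem_biUnion, mem_filter]; tauto
    _ = ∑ s ∈ u.biUnion near, #{v ∈ u | s ∈ near v} * f s := by
        simp only [sum_const, nsmul_eq_mul]
    _ ≤ ∑ s ∈ u.biUnion near, C * f s :=
        sum_le_sum fun s _ => mul_le_mul_of_nonneg_right (hC s) (hf₀ s)
    _ ≤ ∑' s, C * f s := (hf.mul_left C).sum_le_tsum _ fun s _ => hC₀ s
    _ = C * ∑' s, f s := tsum_mul_left

lemma card_Icc_ceil_floor_le {R : Type*} [CommRing R] [LinearOrder R] [IsStrictOrderedRing R]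
    [FloorRing R] {a b : R} (hab : a ≤ b + 1) : (#(Icc ⌈a⌉ ⌊b⌋) : R) ≤ b - a + 1 := by
  rw [Int.card_Icc, ← Int.cast_natCast, Int.toNat_eq_max, Int.cast_max]
  push_cast
  exact max_le (by linarith [Int.le_ceil a, Int.floor_le b]) (by linarith)

section Lattice

variable {ι : Type*}

/-- The point of the rescaled lattice `aℤ^ι` with integer coordinates `v`. -/
def latticePoint (a : ℝ) (v : ι → ℤ) : ι → ℝ :=
  fun d => a * v d

variable [Fintype ι]

/-- The points of the lattice `aℤ^ι` in the closed ball of radius `L` around `c` for the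
sup distance, given by their integer coordinates. -/
def latticeBall [DecidableEq ι] (a : ℝ) (c : ι → ℝ) (L : ℝ) : Finset (ι → ℤ) :=
  Fintype.piFinset fun d => Icc ⌈(c d - L) / a⌉ ⌊(c d + L) / a⌋

variable [DecidableEq ι] {a L : ℝ}

lemma mem_latticeBall (ha : 0 < a) (hL : 0 ≤ L) {c : ι → ℝ} {v : ι → ℤ} :
    v ∈ latticeBall a c L ↔ dist (latticePoint a v) c ≤ L := by
  rw [latticeBall, Fintype.mem_piFinset, dist_pi_le_iff hL]
  refine forall_congr' fun d => ?_
  rw [mem_Icc, Int.ceil_le, Int.le_floor, div_le_iff₀ ha, le_div_iff₀ ha, Real.dist_eq, abs_le,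
    latticePoint, mul_comm a]
  constructor <;> rintro ⟨_, _⟩ <;> constructor <;> linarith

lemma mem_latticeBall_comm {b : ℝ} (ha : 0 < a) (hb : 0 < b) (hL : 0 ≤ L) {v w : ι → ℤ} :
    v ∈ latticeBall a (latticePoint b w) L ↔ w ∈ latticeBall b (latticePoint a v) L := by
  rw [mem_latticeBall ha hL, mem_latticeBall hb hL, dist_comm]

lemma card_latticeBall_le (ha : 0 < a) (hL : 0 ≤ L) (c : ι → ℝ) :
    (#(latticeBall a c L) : ℝ) ≤ (2 * (L / a) + 1) ^ Fintype.card ι := by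
  have hside : ∀ d, (#(Icc ⌈(c d - L) / a⌉ ⌊(c d + L) / a⌋) : ℝ) ≤ 2 * (L / a) + 1 := fun d =>
    have hle : (c d - L) / a ≤ (c d + L) / a := by gcongr; linarith
    calc _ ≤ (c d + L) / a - (c d - L) / a + 1 := card_Icc_ceil_floor_le (by linarith)
      _ = 2 * (L / a) + 1 := by ring
  rw [latticeBall, Fintype.card_piFinset, Nat.cast_prod, ← card_univ, ← prod_const]
  exact prod_le_prod (fun _ _ => Nat.cast_nonneg _) fun d _ => hside d

lemma card_latticeBall_le_of_le (ha : 0 < a) (haL : a ≤ L) (c : ι → ℝ) :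
    (#(latticeBall a c L) : ℝ) ≤ 3 ^ Fintype.card ι * (L / a) ^ Fintype.card ι := by
  have hL : 0 ≤ L := ha.le.trans haL
  have hLa : 1 ≤ L / a := (one_le_div ha).2 haL
  rw [← mul_pow]
  refine (card_latticeBall_le ha hL c).trans ?_
  gcongr
  linarith

lemma card_filter_mem_latticeBall_le {b : ℝ} (ha : 0 < a) (hb : 0 < b) (haL : a ≤ L)
    (u : Finset (ι → ℤ)) (w : ι → ℤ) :
    (#{v ∈ u | w ∈ latticeBall b (latticePoint a v) L} : ℝ) ≤
      3 ^ Fintype.card ι * (L / a) ^ Fintype.card ι := by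
  refine le_trans ?_ (card_latticeBall_le_of_le ha haL (latticePoint b w))
  exact_mod_cast card_le_card fun v hv =>
    (mem_latticeBall_comm hb ha (ha.le.trans haL)).1 (mem_filter.1 hv).2

end Lattice

section Cube

variable {ι κ : Type*}

/-- The half-open cube `c + [-ℓ/2, ℓ/2)^ι`. -/
def halfOpenCube (c : ι → ℝ) (ℓ : ℝ) : Set (ι → ℝ) :=
  {p | ∀ d, p d - c d ∈ Set.Ico (-(ℓ / 2)) (ℓ / 2)}

/-- The number of members of the family `x` lying in the half-open cube of side length `ℓ`
centred at `c`: the analogue of `boxCount` in any dimension and for any index type. -/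
def cubeCount (x : κ → ι → ℝ) (c : ι → ℝ) (ℓ : ℝ) : ℕ :=
  {i | x i ∈ halfOpenCube c ℓ}.ncard

/-- The integer coordinates of the centre of the cell containing `p`, in the tiling of `ℝ^ι` by the
half-open cubes of side length `ℓ` centred on `ℓℤ^ι`. -/
def cellIndex (ℓ : ℝ) (p : ι → ℝ) : ι → ℤ :=
  fun d => round (p d / ℓ)

variable {ℓ L : ℝ}

lemma mem_halfOpenCube_latticePoint_iff (hℓ : 0 < ℓ) {p : ι → ℝ} {s : ι → ℤ} :
    p ∈ halfOpenCube (latticePoint ℓ s) ℓ ↔ cellIndex ℓ p = s := by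
  rw [funext_iff]
  refine forall_congr' fun d => ?_
  rw [cellIndex, round_eq_iff, Set.mem_Ico, Set.mem_Ico, le_div_iff₀ hℓ, div_lt_iff₀ hℓ,
    latticePoint]
  constructor <;> rintro ⟨_, _⟩ <;> constructor <;> linarith

lemma finite_setOf_cubeCount_latticePoint_ne_zero [Finite κ] (hℓ : 0 < ℓ) (x : κ → ι → ℝ) :
    {s : ι → ℤ | cubeCount x (latticePoint ℓ s) ℓ ≠ 0}.Finite := by
  refine (Set.finite_range fun i => cellIndex ℓ (x i)).subset fun s hs => ?_
  obtain ⟨i, hi⟩ := Set.nonempty_of_ncard_ne_zero hs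
  exact ⟨i, (mem_halfOpenCube_latticePoint_iff hℓ).1 hi⟩

lemma summable_truncatedRpow_cubeCount [Finite κ] {α : ℝ} (hα : α ≠ 0) (hℓ : 0 < ℓ) (β : ℝ)
    (x : κ → ι → ℝ) :
    Summable fun s : ι → ℤ => truncatedRpow α β (cubeCount x (latticePoint ℓ s) ℓ) := by
  refine summable_of_hasFiniteSupport
    ((finite_setOf_cubeCount_latticePoint_ne_zero hℓ x).subset fun s hs hzero => hs ?_)
  simp only [hzero, Nat.cast_zero, truncatedRpow_zero_right hα]

variable [Fintype ι]

lemma dist_le_of_mem_halfOpenCube (hℓ : 0 ≤ ℓ) {c p : ι → ℝ} (hp : p ∈ halfOpenCube c ℓ) :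
    dist p c ≤ ℓ / 2 :=
  (dist_pi_le_iff (div_nonneg hℓ zero_le_two)).2 fun d => abs_le.2 ⟨(hp d).1, (hp d).2.le⟩

variable [DecidableEq ι]

lemma halfOpenCube_subset_biUnion (hℓ : 0 < ℓ) (hℓL : ℓ ≤ L) (c : ι → ℝ) :
    halfOpenCube c L ⊆ ⋃ s ∈ latticeBall ℓ c L, halfOpenCube (latticePoint ℓ s) ℓ := by
  intro p hp
  have hL : 0 ≤ L := hℓ.le.trans hℓL
  have hcell : p ∈ halfOpenCube (latticePoint ℓ (cellIndex ℓ p)) ℓ :=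
    (mem_halfOpenCube_latticePoint_iff hℓ).2 rfl
  refine Set.mem_biUnion ((mem_latticeBall hℓ hL).2 ?_) hcell
  linarith [dist_triangle_left (latticePoint ℓ (cellIndex ℓ p)) c p,
    dist_le_of_mem_halfOpenCube hℓ.le hcell, dist_le_of_mem_halfOpenCube hL hp]

variable [Finite κ]

lemma cubeCount_le_sum_cubeCount (hℓ : 0 < ℓ) (hℓL : ℓ ≤ L) (x : κ → ι → ℝ) (c : ι → ℝ) :
    cubeCount x c L ≤ ∑ s ∈ latticeBall ℓ c L, cubeCount x (latticePoint ℓ s) ℓ := by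
  refine (Set.ncard_le_ncard (t := ⋃ s ∈ latticeBall ℓ c L,
    {i | x i ∈ halfOpenCube (latticePoint ℓ s) ℓ}) fun i hi => ?_).trans
      (set_ncard_biUnion_le _ _)
  simpa only [Set.mem_iUnion, Set.mem_ofPred_eq] using halfOpenCube_subset_biUnion hℓ hℓL c hi

lemma truncatedRpow_cubeCount_le {α β : ℝ} (hα : 1 ≤ α) (hβ : 0 ≤ β) (hℓ : 0 < ℓ) (hℓL : ℓ ≤ L)
    (x : κ → ι → ℝ) (c : ι → ℝ) :
    truncatedRpow α (2 * β * (3 ^ Fintype.card ι * (L / ℓ) ^ Fintype.card ι)) (cubeCount x c L) ≤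
      2 ^ α * (3 ^ Fintype.card ι * (L / ℓ) ^ Fintype.card ι) ^ (α - 1) *
        ∑ s ∈ latticeBall ℓ c L, truncatedRpow α β (cubeCount x (latticePoint ℓ s) ℓ) := by
  refine (truncatedRpow_le_truncatedRpow (zero_le_one.trans hα) (Nat.cast_nonneg _) ?_ _).trans
    (truncatedRpow_sum_le hα hβ (fun _ _ => Nat.cast_nonneg _)
      (card_latticeBall_le_of_le hℓ hℓL c))
  exact_mod_cast cubeCount_le_sum_cubeCount hℓ hℓL x c

end Cube

theorem convexity_estimate_boxes_general {ι κ : Type*} [Fintype ι] [Finite κ] {α β ℓ₁ ℓ₂ ℓ₃ : ℝ}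
    (hα : 1 ≤ α) (hβ : 0 ≤ β) (hℓ₂ : 0 < ℓ₂) (hℓ₃ : 0 < ℓ₃) (hℓ₂₁ : ℓ₂ ≤ ℓ₁) (hℓ₃₁ : ℓ₃ ≤ ℓ₁)
    (x : κ → ι → ℝ) :
    ∑' v : ι → ℤ, truncatedRpow α (2 * 3 ^ Fintype.card ι * β * (ℓ₁ / ℓ₃) ^ Fintype.card ι)
        (cubeCount x (latticePoint ℓ₂ v) ℓ₁) ≤
      (2 * 3 ^ Fintype.card ι) ^ α * (ℓ₁ / ℓ₂) ^ Fintype.card ι *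
        (ℓ₁ / ℓ₃) ^ (Fintype.card ι * (α - 1)) *
        ∑' s : ι → ℤ, truncatedRpow α β (cubeCount x (latticePoint ℓ₃ s) ℓ₃) := by
  classical
  have hℓ₁ : 0 < ℓ₁ := hℓ₂.trans_le hℓ₂₁
  set n := Fintype.card ι
  set f : (ι → ℤ) → ℝ := fun s => truncatedRpow α β (cubeCount x (latticePoint ℓ₃ s) ℓ₃)
  have hf₀ : ∀ s, 0 ≤ f s := fun s => truncatedRpow_nonneg (Nat.cast_nonneg _) α β
  have hf : Summable f := summable_truncatedRpow_cubeCount (by linarith) hℓ₃ β x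
  have hthreshold : 2 * 3 ^ n * β * (ℓ₁ / ℓ₃) ^ n = 2 * β * (3 ^ n * (ℓ₁ / ℓ₃) ^ n) := by ring
  have hconst : (2 * 3 ^ n) ^ α * (ℓ₁ / ℓ₂) ^ n * (ℓ₁ / ℓ₃) ^ (n * (α - 1)) =
      2 ^ α * (3 ^ n * (ℓ₁ / ℓ₃) ^ n) ^ (α - 1) * (3 ^ n * (ℓ₁ / ℓ₂) ^ n) := by
    rw [Real.mul_rpow zero_le_two (by positivity), Real.mul_rpow (by positivity) (by positivity),
      Real.rpow_mul (by positivity), Real.rpow_natCast,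
      Real.rpow_sub_one (x := 3 ^ n) (by positivity)]
    field_simp
  rw [hthreshold, hconst]
  refine tsum_le_of_sum_le' (mul_nonneg (by positivity) (tsum_nonneg hf₀)) fun u => ?_
  calc _ ≤ ∑ v ∈ u, 2 ^ α * (3 ^ n * (ℓ₁ / ℓ₃) ^ n) ^ (α - 1) *
          ∑ s ∈ latticeBall ℓ₃ (latticePoint ℓ₂ v) ℓ₁, f s :=
        sum_le_sum fun v _ => truncatedRpow_cubeCount_le hα hβ hℓ₃ hℓ₃₁ x _
    _ ≤ 2 ^ α * (3 ^ n * (ℓ₁ / ℓ₃) ^ n) ^ (α - 1) * (3 ^ n * (ℓ₁ / ℓ₂) ^ n * ∑' s, f s) := by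
        rw [← mul_sum]
        gcongr
        exact sum_sum_le_mul_tsum hf₀ hf u _ (card_filter_mem_latticeBall_le hℓ₂ hℓ₃ hℓ₂₁ u)
    _ = _ := (mul_assoc _ _ _).symm

/-- Convexity estimate comparing `α`-th moments of box occupation numbers at scale
`ℓ₁` (boxes centred on the lattice `ℓ₂ℤ³`) with those at the finer scale `ℓ₃`,
restricted to densely occupied boxes. -/
theorem convexity_estimate_boxes (β : ℝ) (hβ : 1 ≤ β) :
    ∃ Cβ > 0, ∀ α : ℝ, 1 ≤ α → ∃ Cαβ > 0,
      ∀ ℓ₁ ℓ₂ ℓ₃ : ℝ, 0 < ℓ₃ → ℓ₃ ≤ ℓ₂ → ℓ₂ ≤ ℓ₁ →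
      ∀ (M : ℕ) (x : Fin M → E3),
      (∑' v : Fin 3 → ℤ,
          (boxCount x (fun d => ℓ₂ * v d) ℓ₁ : ℝ) ^ α *
            (if Cβ * (ℓ₁ / ℓ₃) ^ 3 ≤ (boxCount x (fun d => ℓ₂ * v d) ℓ₁ : ℝ)
              then 1 else 0))
      ≤ Cαβ * (ℓ₁ / ℓ₂) ^ 3 * (ℓ₁ / ℓ₃) ^ (3 * (α - 1)) *
          ∑' s : Fin 3 → ℤ,
            (boxCount x (fun d => ℓ₃ * s d) ℓ₃ : ℝ) ^ α *
              (if β ≤ (boxCount x (fun d => ℓ₃ * s d) ℓ₃ : ℝ) then 1 else 0) := by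
  refine ⟨2 * 3 ^ 3 * β, by positivity, fun α hα => ⟨(2 * 3 ^ 3) ^ α, by positivity, ?_⟩⟩
  intro ℓ₁ ℓ₂ ℓ₃ hℓ₃ hℓ₃₂ hℓ₂₁ M x
  have hboxes := convexity_estimate_boxes_general hα (zero_le_one.trans hβ) (hℓ₃.trans_le hℓ₃₂) hℓ₃
    hℓ₂₁ (hℓ₃₂.trans hℓ₂₁) fun i d => x i d
  -- `boxCount` unfolds definitionally to the three-dimensional `cubeCount`.
  rwa [Fintype.card_fin, Nat.cast_ofNat] at hboxes
end
end

section
/- Let A : ℝ⁶ → ℝ⁶ be an invertible linear map with operator norms ‖A‖ ≤ 2 and ‖A^{−1}‖ ≤ 2. Then there exists a constant C > 0, depending only on these norm bounds (in particular independent of λ), such that for every λ > 0 and every measurable g : ℝ⁶ → ℝ satisfying |g(y)| ≤ λ^{−2} · 1(λ/2 ≤ |y| ≤ λ) · |y|^{−4} for almost every y, the functions u(x) := ∫_{ℝ⁶} g(y) |A(x − y)|^{−4} dy and v(x) := ∫_{ℝ⁶} g(y) A(x − y) |A(x − y)|^{−6} dy satisfy |u(x)| ≤ C/(λ⁴ +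 |x|⁴) and |v(x)| ≤ C/(λ⁵ + |x|⁵) for all x ∈ ℝ⁶. -/
open MeasureTheory

noncomputable section

local notation "E6" => EuclideanSpace ℝ (Fin 6)

/-!
Write `d` for the dimension and `R` for `λ`. On the shell the density is at most a constant times
`R⁻ᵈ 1(|y| ≤ R)`, and `|A z|⁻ᵖ ≤ Kᵖ |z|⁻ᵖ`, so everything reduces to bounding
`∫_{|y| ≤ R} |x - y|⁻ᵖ dy` by a multiple of `Rᵈ / (Rᵖ + |x|ᵖ)` for `p < d`.

For `|y| ≤ R` we have `|x| ≤ 2 max (R, |x - y|)`, hence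
`(Rᵖ + |x|ᵖ) |x - y|⁻ᵖ ≤ (1 + 2ᵖ) (1 + Rᵖ |x - y|⁻ᵖ 1(|x - y| < R))`
uniformly in `x`. Integrating the right-hand side over `|y| ≤ R` costs at most a multiple of `Rᵈ`,
since `∫_{|z| < R} |z|⁻ᵖ dz` is a multiple of `Rᵈ⁻ᵖ`.
-/

open Metric Module Set

open scoped NNReal

variable {E F G : Type*} [NormedAddCommGroup E] [NormedAddCommGroup F] [NormedSpace ℝ F]
  [NormedAddCommGroup G] [NormedSpace ℝ G] {p R M : ℝ}

lemma rpow_add_rpow_norm_le (hp : 0 ≤ p) {x y : E} (hy : ‖y‖ ≤ R) :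
    R ^ p + ‖x‖ ^ p ≤ (1 + 2 ^ p) * max R ‖x - y‖ ^ p := by
  have hR : 0 ≤ R := (norm_nonneg y).trans hy
  have hx : ‖x‖ ≤ 2 * max R ‖x - y‖ := by
    linarith [norm_sub_norm_le x y, le_max_left R ‖x - y‖, le_max_right R ‖x - y‖]
  calc R ^ p + ‖x‖ ^ p
      ≤ max R ‖x - y‖ ^ p + (2 * max R ‖x - y‖) ^ p := by
        gcongr
        exact le_max_left _ _
    _ = (1 + 2 ^ p) * max R ‖x - y‖ ^ p := by
        rw [Real.mul_rpow zero_le_two (hR.trans (le_max_left _ _))]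
        ring

/-- The Riesz kernel of order `p`, cut off to the open ball of radius `R`. -/
def truncatedRieszKernel (p R : ℝ) : E → ℝ :=
  (ball 0 R).indicator fun z ↦ (‖z‖ ^ p)⁻¹

lemma truncatedRieszKernel_nonneg (p R : ℝ) (z : E) : 0 ≤ truncatedRieszKernel p R z :=
  indicator_nonneg (fun _ _ ↦ by positivity) z

lemma max_rpow_mul_inv_rpow_norm_le (p R : ℝ) (z : E) :
    max R ‖z‖ ^ p * (‖z‖ ^ p)⁻¹ ≤ 1 + R ^ p * truncatedRieszKernel p R z := by
  unfold truncatedRieszKernel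
  rcases lt_or_ge ‖z‖ R with hz | hz
  · rw [max_eq_left hz.le, indicator_of_mem (mem_ball_zero_iff.2 hz)]
    linarith
  · rw [max_eq_right hz, indicator_of_notMem (by simpa using hz), mul_zero, add_zero]
    exact mul_inv_le_one

/-- For fixed `x`, a majorant in `y` of `(Rᵖ + |x|ᵖ) |x - y|⁻ᵖ` on the ball `|y| ≤ R`; it is a
constant plus a translate of an integrable function, so its integral is bounded uniformly in `x`. -/
def rieszMajorant (p R : ℝ) (x y : E) : ℝ :=
  (1 + 2 ^ p) * (1 + R ^ p * truncatedRieszKernel p R (x - y))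

lemma rpow_add_rpow_norm_mul_inv_rpow_norm_sub_le (hp : 0 ≤ p) {x y : E} (hy : ‖y‖ ≤ R) :
    (R ^ p + ‖x‖ ^ p) * (‖x - y‖ ^ p)⁻¹ ≤ rieszMajorant p R x y := by
  calc (R ^ p + ‖x‖ ^ p) * (‖x - y‖ ^ p)⁻¹
      ≤ (1 + 2 ^ p) * (max R ‖x - y‖ ^ p * (‖x - y‖ ^ p)⁻¹) := by
        rw [← mul_assoc]
        gcongr
        exact rpow_add_rpow_norm_le hp hy
    _ ≤ rieszMajorant p R x y := by
        unfold rieszMajorant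
        gcongr
        exact max_rpow_mul_inv_rpow_norm_le p R (x - y)

lemma shell_le_indicator_closedBall {k m n : ℕ} (hn : k + m = n) (hR : 0 < R) (y : E) :
    (R ^ k)⁻¹ * (if R / 2 ≤ ‖y‖ ∧ ‖y‖ ≤ R then 1 else 0) * (‖y‖ ^ m)⁻¹ ≤
      (closedBall 0 R).indicator (fun _ ↦ 2 ^ m * (R ^ n)⁻¹) y := by
  split_ifs with hy
  · rw [indicator_of_mem (mem_closedBall_zero_iff.2 hy.2)]
    calc (R ^ k)⁻¹ * 1 * (‖y‖ ^ m)⁻¹ ≤ (R ^ k)⁻¹ * 1 * ((R / 2) ^ m)⁻¹ := by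
          gcongr
          exact hy.1
      _ = 2 ^ m * (R ^ n)⁻¹ := by
          rw [div_pow, ← hn, pow_add]
          field_simp
  · rw [mul_zero, zero_mul]
    exact indicator_nonneg (fun _ _ ↦ by positivity) y

lemma norm_inv_rpow_add_one_smul_self_le (p : ℝ) (w : F) :
    ‖(‖w‖ ^ (p + 1))⁻¹ • w‖ ≤ (‖w‖ ^ p)⁻¹ := by
  rcases eq_or_ne w 0 with rfl | hw
  · simp only [smul_zero, norm_zero]
    positivity
  · have hw' : 0 < ‖w‖ := norm_pos_iff.2 hw
    rw [norm_smul, norm_inv, Real.norm_of_nonneg (by positivity), Real.rpow_add_one hw'.ne']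
    rw [mul_inv, inv_mul_cancel_right₀ hw'.ne']

lemma inv_rpow_norm_map_le [NormedSpace ℝ E] {A : E →L[ℝ] F} {K : ℝ≥0}
    (hA : AntilipschitzWith K A) (hp : 0 ≤ p) (z : E) :
    (‖A z‖ ^ p)⁻¹ ≤ K ^ p * (‖z‖ ^ p)⁻¹ := by
  rcases eq_or_ne z 0 with rfl | hz
  · rcases hp.eq_or_lt with rfl | hp
    · simp
    · simp [Real.zero_rpow hp.ne']
  · have hz : 0 < ‖z‖ := norm_pos_iff.2 hz
    have hle : ‖z‖ ≤ K * ‖A z‖ := A.bound_of_antilipschitz hA z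
    have hAz : 0 < ‖A z‖ := pos_of_mul_pos_right (hz.trans_le hle) K.2
    rw [← div_eq_mul_inv, le_div_iff₀ (by positivity), inv_mul_le_iff₀ (by positivity), mul_comm,
      ← Real.mul_rpow K.coe_nonneg hAz.le]
    gcongr

lemma pow_pred_smul_inv_rpow {n : ℕ} (hn : 0 < n) (p : ℝ) {r : ℝ} (hr : 0 < r) :
    r ^ (n - 1) • (r ^ p)⁻¹ = r ^ (n - p - 1) := by
  rw [smul_eq_mul, ← Real.rpow_natCast, ← Real.rpow_neg hr.le, ← Real.rpow_add hr,
    Nat.cast_pred hn]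
  congr 1
  ring

section Integral

variable [NormedSpace ℝ E] [MeasurableSpace E] {μ : Measure E} {g : E → ℝ} {k : E → G} {B : ℝ}

lemma ae_norm_smul_le_indicator_inv_rpow
    (hg : ∀ᵐ y ∂μ, |g y| ≤ (closedBall 0 R).indicator (fun _ ↦ M * (R ^ finrank ℝ E)⁻¹) y)
    (hk : ∀ z, ‖k z‖ ≤ B * (‖z‖ ^ p)⁻¹) (x : E) :
    ∀ᵐ y ∂μ, ‖g y • k (x - y)‖ ≤ M * (R ^ finrank ℝ E)⁻¹ * B *
      (closedBall 0 R).indicator (fun y ↦ (‖x - y‖ ^ p)⁻¹) y := by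
  filter_upwards [hg] with y hy
  calc ‖g y • k (x - y)‖ = |g y| * ‖k (x - y)‖ := norm_smul _ _
    _ ≤ (closedBall 0 R).indicator (fun _ ↦ M * (R ^ finrank ℝ E)⁻¹) y *
          (B * (‖x - y‖ ^ p)⁻¹) :=
        mul_le_mul hy (hk _) (norm_nonneg _) ((abs_nonneg _).trans hy)
    _ = _ := by
        by_cases hyR : y ∈ closedBall 0 R
        · simp only [indicator_of_mem hyR, mul_assoc]
        · simp only [indicator_of_notMem hyR, zero_mul, mul_zero]

variable (μ)

/-- The constant in the decay estimate for the Riesz kernel of order `p`, blowing up as `p` tends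
to the dimension. -/
def rieszDecayConst (p : ℝ) : ℝ :=
  (1 + 2 ^ p) * (1 + finrank ℝ E / (finrank ℝ E - p)) * μ.real (ball 0 1)

lemma rieszDecayConst_nonneg (hp : p < finrank ℝ E) : 0 ≤ rieszDecayConst μ p := by
  have : 0 < finrank ℝ E - p := sub_pos.2 hp
  unfold rieszDecayConst
  positivity

variable [FiniteDimensional ℝ E] [Nontrivial E] [BorelSpace E] [μ.IsAddHaarMeasure]

lemma integrable_truncatedRieszKernel (hp : p < finrank ℝ E) (hR : 0 < R) :
    Integrable (truncatedRieszKernel p R) μ := by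
  rw [truncatedRieszKernel, integrable_indicator_iff measurableSet_ball,
    integrableOn_fun_norm_addHaar μ (f := fun r ↦ (r ^ p)⁻¹), integrableOn_congr_fun
    (fun r hr ↦ pow_pred_smul_inv_rpow finrank_pos p hr.1) measurableSet_Ioo,
    intervalIntegral.integrableOn_Ioo_rpow_iff hR]
  linarith

lemma integral_truncatedRieszKernel (hp : p < finrank ℝ E) (hR : 0 < R) :
    ∫ z, truncatedRieszKernel p R z ∂μ =
      finrank ℝ E / (finrank ℝ E - p) * μ.real (ball 0 1) * R ^ (finrank ℝ E - p) := by
  have hradial : ∀ r ∈ Ioi (0 : ℝ),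
      r ^ (finrank ℝ E - 1) • (Iio R).indicator (fun s ↦ (s ^ p)⁻¹) r =
        (Iio R).indicator (fun s ↦ s ^ (finrank ℝ E - p - 1)) r := by
    intro r hr
    rw [← indicator_const_smul_apply]
    by_cases hrR : r ∈ Iio R
    · simp only [indicator_of_mem hrR, pow_pred_smul_inv_rpow finrank_pos p hr]
    · simp only [indicator_of_notMem hrR]
  calc ∫ z, truncatedRieszKernel p R z ∂μ
      = ∫ z, (Iio R).indicator (fun r ↦ (r ^ p)⁻¹) ‖z‖ ∂μ := by
        simp [truncatedRieszKernel, indicator]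
    _ = finrank ℝ E • μ.real (ball 0 1) • ∫ r in 0..R, r ^ (finrank ℝ E - p - 1) := by
        rw [integral_fun_norm_addHaar, setIntegral_congr_fun measurableSet_Ioi hradial,
          setIntegral_indicator measurableSet_Iio, Ioi_inter_Iio,
          intervalIntegral.integral_of_le hR.le, integral_Ioc_eq_integral_Ioo]
    _ = _ := by
        rw [integral_rpow (.inl (by linarith)), sub_add_cancel, Real.zero_rpow (by linarith),
          sub_zero, nsmul_eq_mul, smul_eq_mul]
        ring

lemma integrableOn_rieszMajorant (hp : p < finrank ℝ E) (hR : 0 < R) (x : E) :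
    IntegrableOn (rieszMajorant p R x) (closedBall 0 R) μ :=
  ((integrableOn_const measure_closedBall_lt_top.ne).add
    (((integrable_truncatedRieszKernel μ hp hR).comp_sub_left x).integrableOn.const_mul
      (R ^ p))).const_mul (1 + 2 ^ p)

lemma setIntegral_rieszMajorant_le (hp : p < finrank ℝ E) (hR : 0 < R) (x : E) :
    ∫ y in closedBall 0 R, rieszMajorant p R x y ∂μ ≤
      rieszDecayConst μ p * R ^ finrank ℝ E := by
  have hint : Integrable (fun y ↦ truncatedRieszKernel p R (x - y)) μ :=
    (integrable_truncatedRieszKernel μ hp hR).comp_sub_left x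
  have hone : Integrable (fun _ ↦ (1 : ℝ)) (μ.restrict (closedBall 0 R)) :=
    integrableOn_const measure_closedBall_lt_top.ne
  have hkernel : ∫ y in closedBall 0 R, truncatedRieszKernel p R (x - y) ∂μ ≤
      finrank ℝ E / (finrank ℝ E - p) * μ.real (ball 0 1) * R ^ (finrank ℝ E - p) := by
    rw [← integral_truncatedRieszKernel μ hp hR,
      ← integral_sub_left_eq_self (truncatedRieszKernel p R) μ x]
    exact setIntegral_le_integral hint
      (.of_forall fun y ↦ truncatedRieszKernel_nonneg p R (x - y))
  calc ∫ y in closedBall 0 R, rieszMajorant p R x y ∂μ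
      = (1 + 2 ^ p) * (R ^ finrank ℝ E * μ.real (ball 0 1) +
          R ^ p * ∫ y in closedBall 0 R, truncatedRieszKernel p R (x - y) ∂μ) := by
        unfold rieszMajorant
        rw [integral_const_mul, integral_add hone (hint.integrableOn.const_mul _),
          integral_const_mul, setIntegral_const, Measure.addHaar_real_closedBall _ _ hR.le,
          smul_eq_mul, mul_one]
    _ ≤ (1 + 2 ^ p) * (R ^ finrank ℝ E * μ.real (ball 0 1) + R ^ p *
          (finrank ℝ E / (finrank ℝ E - p) * μ.real (ball 0 1) * R ^ (finrank ℝ E - p))) := by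
        gcongr
    _ = rieszDecayConst μ p * R ^ finrank ℝ E := by
        rw [Real.rpow_sub hR, Real.rpow_natCast, rieszDecayConst]
        field_simp

lemma integrableOn_inv_rpow_norm_sub (hp₀ : 0 ≤ p) (hp : p < finrank ℝ E) (hR : 0 < R) (x : E) :
    IntegrableOn (fun y ↦ (‖x - y‖ ^ p)⁻¹) (closedBall 0 R) μ := by
  refine ((integrableOn_rieszMajorant μ hp hR x).const_mul (R ^ p + ‖x‖ ^ p)⁻¹).mono'
    (by fun_prop) (ae_restrict_of_forall_mem measurableSet_closedBall fun y hy ↦ ?_)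
  rw [Real.norm_of_nonneg (by positivity), le_inv_mul_iff₀ (by positivity)]
  exact rpow_add_rpow_norm_mul_inv_rpow_norm_sub_le hp₀ (mem_closedBall_zero_iff.1 hy)

lemma setIntegral_inv_rpow_norm_sub_le (hp₀ : 0 ≤ p) (hp : p < finrank ℝ E) (hR : 0 < R) (x : E) :
    ∫ y in closedBall 0 R, (‖x - y‖ ^ p)⁻¹ ∂μ ≤
      rieszDecayConst μ p * R ^ finrank ℝ E / (R ^ p + ‖x‖ ^ p) := by
  rw [le_div_iff₀' (by positivity), ← integral_const_mul]
  refine (setIntegral_mono_on ((integrableOn_inv_rpow_norm_sub μ hp₀ hp hR x).const_mul _)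
    (integrableOn_rieszMajorant μ hp hR x) measurableSet_closedBall fun y hy ↦ ?_).trans
    (setIntegral_rieszMajorant_le μ hp hR x)
  exact rpow_add_rpow_norm_mul_inv_rpow_norm_sub_le hp₀ (mem_closedBall_zero_iff.1 hy)

variable {μ}

lemma integrable_smul_kernel (hp₀ : 0 ≤ p) (hp : p < finrank ℝ E) (hR : 0 < R)
    (hg_meas : AEStronglyMeasurable g μ)
    (hg : ∀ᵐ y ∂μ, |g y| ≤ (closedBall 0 R).indicator (fun _ ↦ M * (R ^ finrank ℝ E)⁻¹) y)
    (hk_meas : StronglyMeasurable k) (hk : ∀ z, ‖k z‖ ≤ B * (‖z‖ ^ p)⁻¹) (x : E) :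
    Integrable (fun y ↦ g y • k (x - y)) μ :=
  (((integrableOn_inv_rpow_norm_sub μ hp₀ hp hR x).integrable_indicator
    measurableSet_closedBall).const_mul _).mono'
    (hg_meas.smul (hk_meas.comp_measurable (by fun_prop)).aestronglyMeasurable)
    (ae_norm_smul_le_indicator_inv_rpow hg hk x)

lemma norm_integral_smul_kernel_le (hp₀ : 0 ≤ p) (hp : p < finrank ℝ E) (hR : 0 < R)
    (hM : 0 ≤ M) (hB : 0 ≤ B)
    (hg : ∀ᵐ y ∂μ, |g y| ≤ (closedBall 0 R).indicator (fun _ ↦ M * (R ^ finrank ℝ E)⁻¹) y)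
    (hk : ∀ z, ‖k z‖ ≤ B * (‖z‖ ^ p)⁻¹) (x : E) :
    ‖∫ y, g y • k (x - y) ∂μ‖ ≤ M * B * rieszDecayConst μ p / (R ^ p + ‖x‖ ^ p) :=
  calc ‖∫ y, g y • k (x - y) ∂μ‖
      ≤ ∫ y, M * (R ^ finrank ℝ E)⁻¹ * B *
          (closedBall 0 R).indicator (fun y ↦ (‖x - y‖ ^ p)⁻¹) y ∂μ :=
        norm_integral_le_of_norm_le (((integrableOn_inv_rpow_norm_sub μ hp₀ hp hR
          x).integrable_indicator measurableSet_closedBall).const_mul _)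
          (ae_norm_smul_le_indicator_inv_rpow hg hk x)
    _ = M * (R ^ finrank ℝ E)⁻¹ * B * ∫ y in closedBall 0 R, (‖x - y‖ ^ p)⁻¹ ∂μ := by
        rw [integral_const_mul, integral_indicator measurableSet_closedBall]
    _ ≤ M * (R ^ finrank ℝ E)⁻¹ * B *
          (rieszDecayConst μ p * R ^ finrank ℝ E / (R ^ p + ‖x‖ ^ p)) := by
        gcongr
        exact setIntegral_inv_rpow_norm_sub_le μ hp₀ hp hR x
    _ = M * B * rieszDecayConst μ p / (R ^ p + ‖x‖ ^ p) := by
        field_simp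

end Integral

theorem riesz_potential_decay_estimates_general [NormedSpace ℝ E] [FiniteDimensional ℝ E]
    [MeasurableSpace E] [BorelSpace E] (μ : Measure E) [μ.IsAddHaarMeasure] {p q : ℝ}
    (hp₀ : 0 ≤ p) (hp : p < finrank ℝ E) (hq₀ : 0 ≤ q) (hq : q < finrank ℝ E)
    (K : ℝ≥0) (hM : 0 ≤ M) :
    ∃ C > 0, ∀ A : E →L[ℝ] F, AntilipschitzWith K A → ∀ R : ℝ, 0 < R →
      ∀ g : E → ℝ, AEStronglyMeasurable g μ →
      (∀ᵐ y ∂μ, |g y| ≤ (closedBall 0 R).indicator (fun _ ↦ M * (R ^ finrank ℝ E)⁻¹) y) →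
      (∀ x, Integrable (fun y ↦ g y * (‖A (x - y)‖ ^ p)⁻¹) μ ∧
        |∫ y, g y * (‖A (x - y)‖ ^ p)⁻¹ ∂μ| ≤ C / (R ^ p + ‖x‖ ^ p)) ∧
      (∀ x, Integrable (fun y ↦ g y • ((‖A (x - y)‖ ^ (q + 1))⁻¹ • A (x - y))) μ ∧
        ‖∫ y, g y • ((‖A (x - y)‖ ^ (q + 1))⁻¹ • A (x - y)) ∂μ‖ ≤
          C / (R ^ q + ‖x‖ ^ q)) := by
  have : Nontrivial E := nontrivial_of_finrank_pos (R := ℝ) (by exact_mod_cast hp₀.trans_lt hp)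
  have hCp := rieszDecayConst_nonneg μ hp
  have hCq := rieszDecayConst_nonneg μ hq
  refine ⟨1 + M * K ^ p * rieszDecayConst μ p + M * K ^ q * rieszDecayConst μ q, by positivity,
    fun A hA R hR g hg_meas hg ↦ ⟨fun x ↦ ?_, fun x ↦ ?_⟩⟩
  · have hk (z : E) : ‖(‖A z‖ ^ p)⁻¹‖ ≤ K ^ p * (‖z‖ ^ p)⁻¹ := by
      rw [Real.norm_of_nonneg (by positivity)]
      exact inv_rpow_norm_map_le hA hp₀ z
    have hk_meas : StronglyMeasurable fun z ↦ (‖A z‖ ^ p)⁻¹ :=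
      (A.continuous.norm.measurable.pow_const p).inv.stronglyMeasurable
    refine ⟨integrable_smul_kernel hp₀ hp hR hg_meas hg hk_meas hk x,
      (norm_integral_smul_kernel_le hp₀ hp hR hM (by positivity) hg hk x).trans ?_⟩
    gcongr
    linarith [show 0 ≤ M * K ^ q * rieszDecayConst μ q by positivity]
  · have hk (z : E) : ‖(‖A z‖ ^ (q + 1))⁻¹ • A z‖ ≤ K ^ q * (‖z‖ ^ q)⁻¹ :=
      (norm_inv_rpow_add_one_smul_self_le q (A z)).trans (inv_rpow_norm_map_le hA hq₀ z)
    have hk_meas : StronglyMeasurable fun z ↦ (‖A z‖ ^ (q + 1))⁻¹ • A z :=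
      (A.continuous.norm.measurable.pow_const (q + 1)).inv.stronglyMeasurable.smul
        A.continuous.stronglyMeasurable
    refine ⟨integrable_smul_kernel hq₀ hq hR hg_meas hg hk_meas hk x,
      (norm_integral_smul_kernel_le hq₀ hq hR hM (by positivity) hg hk x).trans ?_⟩
    gcongr
    linarith [show 0 ≤ M * K ^ p * rieszDecayConst μ p by positivity]

/-- Pointwise decay estimates for the Riesz-type potential built from the truncation
error of the three-body scattering solution, and for its gradient. -/
theorem riesz_potential_decay_estimates :
    ∃ C > 0, ∀ A : E6 ≃L[ℝ] E6,
      ‖(A : E6 →L[ℝ] E6)‖ ≤ 2 → ‖(A.symm : E6 →L[ℝ] E6)‖ ≤ 2 →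
      ∀ lam : ℝ, 0 < lam →
      ∀ g : E6 → ℝ, Measurable g →
      (∀ᵐ y ∂(volume : Measure E6),
        |g y| ≤ (lam ^ 2)⁻¹ *
          (if lam / 2 ≤ ‖y‖ ∧ ‖y‖ ≤ lam then 1 else 0) * (‖y‖ ^ 4)⁻¹) →
      (∀ x : E6,
        |∫ y : E6, g y * (‖A (x - y)‖ ^ 4)⁻¹| ≤ C / (lam ^ 4 + ‖x‖ ^ 4)) ∧
      (∀ x : E6,
        ‖∫ y : E6, g y • ((‖A (x - y)‖ ^ 6)⁻¹ • A (x - y))‖ ≤ C / (lam ^ 5 + ‖x‖ ^ 5)) := by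
  obtain ⟨C, hC, h⟩ := riesz_potential_decay_estimates_general (F := E6) (volume : Measure E6)
    (p := 4) (q := 5) (by simp) (by norm_num) (by simp) (by norm_num) 2 (M := 2 ^ 4) (by simp)
  refine ⟨C, hC, fun A _ hA lam hlam g hg_meas hg ↦ ?_⟩
  have h' := h A (((A.symm : E6 →L[ℝ] E6).lipschitz.weaken hA).to_rightInverse
    A.symm_apply_apply) lam hlam g hg_meas.aestronglyMeasurable
    (hg.mono fun y hy ↦ hy.trans (shell_le_indicator_closedBall (by simp) hlam y))
  norm_cast at h'
  exact ⟨fun x ↦ (h'.1 x).2, fun x ↦ (h'.2 x).2⟩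
end
end

section
/- Let R, B, L > 0, let W : ℝ⁶ → [0,∞) be integrable with support contained in the ball B(0,R) ⊆ ℝ⁶, and let g : ℝ³ → ℝ satisfy |g| ≤ B everywhere and |g(y) − g(x)| ≤ L|y − x| for all x, y ∈ ℝ³. Then for every real N > 0 and every x ∈ ℝ³, one has |N³ ∫_{ℝ³×ℝ³} W(N^{1/2}(x − y), N^{1/2}(x − z)) g(y) g(z) dy dz − (∫_{ℝ⁶} W) · g(x)²| ≤ 2 B L R (∫_{ℝ⁶} W) N^{−1/2}. -/
open MeasureTheory

noncomputable section

local notation "E3" => EuclideanSpace ℝ (Fin 3)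

/-!
The kernel `N³ W(N^{1/2} ·, N^{1/2} ·)` on `ℝ³ × ℝ³ = ℝ⁶` has the same integral as `W` and is
supported in the ball of radius `N^{-1/2} R`, so the double integral is its convolution with the
tensor square `g ⊗ g`, evaluated on the diagonal. Since `|g| ≤ B`, this tensor square is
`2BL`-Lipschitz for the sup norm on the product, hence varies by at most `2BLR N^{-1/2}` over the
range of integration.
-/

open Function Metric Module
open scoped NNReal

theorem lipschitzWith_mul_of_norm_le {α A : Type*} [PseudoMetricSpace α]
    [NonUnitalSeminormedRing A] {f g : α → A} {Bf Bg Kf Kg : ℝ≥0}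
    (hf : LipschitzWith Kf f) (hg : LipschitzWith Kg g)
    (hfB : ∀ x, ‖f x‖ ≤ Bf) (hgB : ∀ x, ‖g x‖ ≤ Bg) :
    LipschitzWith (Bf * Kg + Kf * Bg) fun x ↦ f x * g x := by
  refine .of_dist_le_mul fun x y ↦ ?_
  have hfxy : ‖f x - f y‖ ≤ Kf * dist x y := dist_eq_norm (f x) _ ▸ hf.dist_le_mul x y
  have hgxy : ‖g x - g y‖ ≤ Kg * dist x y := dist_eq_norm (g x) _ ▸ hg.dist_le_mul x y
  calc dist (f x * g x) (f y * g y)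
      = ‖f x * (g x - g y) + (f x - f y) * g y‖ := by
        rw [dist_eq_norm, mul_sub, sub_mul, sub_add_sub_cancel]
    _ ≤ ‖f x‖ * ‖g x - g y‖ + ‖f x - f y‖ * ‖g y‖ :=
        norm_add_le_of_le (norm_mul_le _ _) (norm_mul_le _ _)
    _ ≤ Bf * (Kg * dist x y) + Kf * dist x y * Bg := by
        gcongr
        exacts [hfB x, hgB y]
    _ = ↑(Bf * Kg + Kf * Bg) * dist x y := by
        push_cast
        ring

theorem lipschitzWith_tensor_square {α A : Type*} [PseudoMetricSpace α]
    [NonUnitalSeminormedRing A] {g : α → A} {B L : ℝ≥0}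
    (hg : LipschitzWith L g) (hgB : ∀ x, ‖g x‖ ≤ B) :
    LipschitzWith (2 * B * L) fun p : α × α ↦ g p.1 * g p.2 := by
  have hfst : LipschitzWith L fun p : α × α ↦ g p.1 := by
    simpa only [mul_one] using! hg.comp LipschitzWith.prod_fst
  have hsnd : LipschitzWith L fun p : α × α ↦ g p.2 := by
    simpa only [mul_one] using! hg.comp LipschitzWith.prod_snd
  rw [show 2 * B * L = B * L + L * B by ring]
  exact lipschitzWith_mul_of_norm_le hfst hsnd (fun p ↦ hgB p.1) (fun p ↦ hgB p.2)

theorem support_uncurry_subset_ball {E : Type*} [SeminormedAddCommGroup E] {R : ℝ} (hR : 0 ≤ R)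
    {W : E → E → ℝ} (hW : ∀ a b, R ^ 2 ≤ ‖a‖ ^ 2 + ‖b‖ ^ 2 → W a b = 0) :
    support (uncurry W) ⊆ ball 0 R := by
  rintro ⟨a, b⟩ hab
  have hlt : ‖a‖ ^ 2 + ‖b‖ ^ 2 < R ^ 2 := not_le.1 (mt (hW a b) hab)
  rw [mem_ball_zero_iff, Prod.norm_mk, max_lt_iff]
  exact ⟨lt_of_pow_lt_pow_left₀ 2 hR (by linarith [sq_nonneg ‖b‖]),
    lt_of_pow_lt_pow_left₀ 2 hR (by linarith [sq_nonneg ‖a‖])⟩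

section RescaledKernel

variable {F : Type*} [NormedAddCommGroup F] [NormedSpace ℝ F]

/-- The kernel `f` contracted by the factor `c`, with the normalisation that preserves its
integral when `0 < c`; as `c → ∞` it concentrates to `(∫ f) δ`. -/
def rescaledKernel (c : ℝ) (f : F → ℝ) (t : F) : ℝ :=
  c ^ finrank ℝ F * f (c • t)

theorem norm_rescaledKernel {c : ℝ} (hc : 0 ≤ c) (f : F → ℝ) (t : F) :
    ‖rescaledKernel c f t‖ = rescaledKernel c (fun s ↦ ‖f s‖) t := by
  rw [rescaledKernel, norm_mul, Real.norm_of_nonneg (by positivity), rescaledKernel]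

theorem support_rescaledKernel_subset_ball {c R : ℝ} (hc : 0 < c) {f : F → ℝ}
    (hf : support f ⊆ ball 0 R) : support (rescaledKernel c f) ⊆ ball 0 (R / c) := by
  intro t ht
  have hct : ‖c • t‖ < R := mem_ball_zero_iff.1 (hf (right_ne_zero_of_mul ht))
  rwa [norm_smul, Real.norm_of_nonneg hc.le, mul_comm, ← lt_div_iff₀ hc,
    ← mem_ball_zero_iff] at hct

variable [FiniteDimensional ℝ F] [MeasurableSpace F] [BorelSpace F]
  {μ : Measure F} [μ.IsAddHaarMeasure]

theorem integrable_rescaledKernel {c : ℝ} (hc : c ≠ 0) {f : F → ℝ} (hf : Integrable f μ) :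
    Integrable (rescaledKernel c f) μ :=
  (hf.comp_smul hc).const_mul _

theorem integral_rescaledKernel {c : ℝ} (hc : 0 < c) (f : F → ℝ) :
    ∫ t, rescaledKernel c f t ∂μ = ∫ t, f t ∂μ := by
  simp only [rescaledKernel]
  rw [integral_const_mul, Measure.integral_comp_smul_of_nonneg μ f c (hR := hc.le), smul_eq_mul,
    mul_inv_cancel_left₀ (by positivity)]

theorem dist_integral_rescaledKernel_smul_le {V : Type*} [NormedAddCommGroup V] [NormedSpace ℝ V]
    [CompleteSpace V] {c R : ℝ} (hc : 0 < c) (hR : 0 ≤ R) {f : F → ℝ} (hf : Integrable f μ)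
    (hfR : support f ⊆ ball 0 R) {G : F → V} {K : ℝ≥0} (hG : LipschitzWith K G) (x : F) :
    dist (∫ t, rescaledKernel c f (x - t) • G t ∂μ) ((∫ t, f t ∂μ) • G x)
      ≤ (∫ t, ‖f t‖ ∂μ) * (K * (R / c)) := by
  have hnear : ∀ y ∈ ball x (R / c), dist (G y) (G x) ≤ K * (R / c) :=
    fun y hy ↦ hG.dist_le_mul_of_le (mem_ball.1 hy).le
  rw [← convolution_lsmul_swap]
  have h := dist_convolution_le' (.lsmul ℝ ℝ) (by positivity)
    (integrable_rescaledKernel hc.ne' hf) (support_rescaledKernel_subset_ball hc hfR)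
    hG.continuous.aestronglyMeasurable hnear
  simp only [ContinuousLinearMap.lsmul_apply, integral_smul_const, norm_rescaledKernel hc.le,
    integral_rescaledKernel hc] at h
  exact h.trans (mul_le_mul_of_nonneg_right (mul_le_of_le_one_left
    (by positivity) ContinuousLinearMap.opNorm_lsmul_le) (by positivity))

end RescaledKernel

theorem pow_finrank_mul_integral_eq_integral_rescaledKernel_sqrt {E : Type*} [NormedAddCommGroup E]
    [NormedSpace ℝ E] [FiniteDimensional ℝ E] [MeasurableSpace E] (μ : Measure E)
    (W : E × E → ℝ) (g : E → ℝ) {N : ℝ} (hN : 0 ≤ N) (x : E) :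
    N ^ finrank ℝ E * ∫ p : E × E, W (√N • (x - p.1), √N • (x - p.2)) * g p.1 * g p.2 ∂μ.prod μ
      = ∫ p, rescaledKernel √N W ((x, x) - p) • (g p.1 * g p.2) ∂μ.prod μ := by
  have hpow : √N ^ finrank ℝ (E × E) = N ^ finrank ℝ E := by
    rw [finrank_prod, ← two_mul, pow_mul, Real.sq_sqrt hN]
  rw [← hpow, ← integral_const_mul]
  simp only [rescaledKernel, Prod.smul_def, Prod.fst_sub, Prod.snd_sub, smul_eq_mul, mul_assoc]

theorem delta_approximation_estimate_general {E : Type*} [NormedAddCommGroup E]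
    [NormedSpace ℝ E] [FiniteDimensional ℝ E] [MeasurableSpace E] [BorelSpace E]
    (μ : Measure E) [μ.IsAddHaarMeasure] {R : ℝ} (hR : 0 ≤ R) {B L : ℝ≥0} {W : E × E → ℝ}
    (hW : Integrable W (μ.prod μ)) (hWR : support W ⊆ ball 0 R)
    {g : E → ℝ} (hgB : ∀ x, |g x| ≤ B) (hgL : LipschitzWith L g) {N : ℝ} (hN : 0 < N) (x : E) :
    |N ^ finrank ℝ E *
          (∫ p : E × E, W (√N • (x - p.1), √N • (x - p.2)) * g p.1 * g p.2 ∂μ.prod μ)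
        - (∫ p, W p ∂μ.prod μ) * g x ^ 2|
      ≤ 2 * B * L * R * (∫ p, |W p| ∂μ.prod μ) * N ^ (-(1 / 2) : ℝ) := by
  have happrox := dist_integral_rescaledKernel_smul_le (Real.sqrt_pos.2 hN) hR hW hWR
    (lipschitzWith_tensor_square hgL hgB) (x, x)
  have hsqrt : N ^ (-(1 / 2) : ℝ) = (√N)⁻¹ := by rw [Real.rpow_neg hN.le, Real.sqrt_eq_rpow]
  rw [pow_finrank_mul_integral_eq_integral_rescaledKernel_sqrt μ W g hN.le x, hsqrt, sq]
  calc _ ≤ (∫ p, |W p| ∂μ.prod μ) * (↑(2 * B * L) * (R / √N)) := happrox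
    _ = _ := by push_cast; ring

/-- The rescaled interaction kernel `N³ W(N^{1/2}(x−y), N^{1/2}(x−z))` acts, up to an
error of order `N^{-1/2}`, as the delta-like potential `(∫W) δ(x−y)δ(x−z)` when tested
against a bounded Lipschitz density `g`. -/
theorem delta_approximation_estimate (R B L : ℝ) (hR : 0 < R) (hB : 0 < B) (hL : 0 < L)
    (W : E3 → E3 → ℝ)
    (hWint : Integrable (Function.uncurry W))
    (hWnonneg : ∀ a b : E3, 0 ≤ W a b)
    (hWsupp : ∀ a b : E3, R ^ 2 ≤ ‖a‖ ^ 2 + ‖b‖ ^ 2 → W a b = 0)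
    (g : E3 → ℝ)
    (hgB : ∀ x : E3, |g x| ≤ B)
    (hgL : ∀ x y : E3, |g y - g x| ≤ L * ‖y - x‖) :
    ∀ N : ℝ, 0 < N → ∀ x : E3,
      |N ^ 3 * (∫ p : E3 × E3,
            W (Real.sqrt N • (x - p.1)) (Real.sqrt N • (x - p.2)) * g p.1 * g p.2)
          - (∫ p : E3 × E3, W p.1 p.2) * g x ^ 2|
        ≤ 2 * B * L * R * (∫ p : E3 × E3, W p.1 p.2) * N ^ (-(1 / 2) : ℝ) := by
  intro N hN x
  have hgLip : LipschitzWith ⟨L, hL.le⟩ g :=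
    .of_dist_le_mul fun y z ↦ dist_eq_norm (g y) _ ▸ dist_eq_norm y _ ▸ hgL z y
  simpa only [uncurry, abs_of_nonneg (hWnonneg _ _), finrank_euclideanSpace_fin] using!
    delta_approximation_estimate_general volume hR.le (B := ⟨B, hB.le⟩) hWint
      (support_uncurry_subset_ball hR.le hWsupp) hgB hgLip hN x
end
end
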